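/- Let K be a field of characteristic zero, and let f be a strictly analytic function on a ball B = c + t^β K[[t]] of K((t)), given by f(c+y) = ∑_{i∈ℕ} a_i y^i. Suppose there exists α ∈ ℤ such that ord(f'(x)) = α for every x ∈ B. Then for every x₀ ∈ B, the restriction of f to the ball x₀ + t^{β+1} K[[t]] is a bijection onto the ball f(x₀) + t^{α+β+1} K[[t]], and the inverse bijection is a strictly analytic function on the ball f(x₀) + t^{α+β+1} K[[t]]. -/

import Mathlib

/-- The `t`-adic order of a Laurent series (with the convention `ord 0 = 0`). -/
noncomputable def ord {K : Type*} [Field K] (x : LaurentSeries K) : ℤ := x.order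

/-- The angular component of a Laurent series: the coefficient of `t^(ord x)`
(so `ac 0 = 0`). -/
noncomputable def ac {K : Type*} [Field K] (x : LaurentSeries K) : K := x.coeff x.order

/-- The ball `c + t^γ K[[t]] = {x : x = c ∨ ord (x - c) ≥ γ}` in `K((t))`. -/
def ball {K : Type*} [Field K] (c : LaurentSeries K) (γ : ℤ) : Set (LaurentSeries K) :=
  {x | x = c ∨ γ ≤ ord (x - c)}

/-!
Recentre the series of `f` at `x₀`. In characteristic zero `K` is infinite, so the Gauss norm of a
series is read off from its values: the bound `α ≤ ord f'` on the ball bounds the coefficients of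
`f'`, and hence, since nonzero integers are units of `K[[t]]`, the non-constant coefficients of `f`
and of its recentring. After the substitution `z = t^β s` this says that
`f (x₀ + z) - f x₀ = t^(α + β) P(s)` for a power series `P` over `K[[t]]` with `P(0) = 0`, whose
linear coefficient is a unit because `ord (f' x₀) = α`. Such a `P` has a compositional inverse `Q`
over `K[[t]]`, and evaluation at topologically nilpotent `s`, i.e. at `s ∈ t K[[t]]`, turns `Q` into
the inverse of `f`.
-/

open Filter HahnSeries PowerSeries Topology
open scoped LaurentSeries Valued

section SeriesEvaluation

variable {R S : Type*} [CommRing R] [CommRing S] [Algebra R S]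

/-- The value `∑ₙ Gₙ sⁿ` of the power series `G` at `s`. Unlike `PowerSeries.aeval` it needs no
topology on the coefficient ring; it is meaningful when `s` is topologically nilpotent. -/
noncomputable def seriesEval [TopologicalSpace S] (G : R⟦X⟧) (s : S) : S :=
  ∑' n, coeff n G • s ^ n

lemma seriesEval_X [TopologicalSpace S] (s : S) : seriesEval (X : R⟦X⟧) s = s := by
  rw [seriesEval, tsum_eq_single 1 fun n hn ↦ by rw [coeff_X, if_neg hn, zero_smul],
    coeff_one_X, one_smul, pow_one]

variable [UniformSpace S] [IsUniformAddGroup S] [IsTopologicalRing S] [IsLinearTopology S S]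
  [T2Space S] [CompleteSpace S] {s : S}

attribute [local instance] DiscreteTopology.instContinuousSMul

lemma seriesEval_eq_aeval [UniformSpace R] [DiscreteUniformity R]
    (hs : IsTopologicallyNilpotent s) (G : R⟦X⟧) :
    seriesEval G s = aeval (R := R) hs G :=
  (aeval_eq_sum hs G).symm

lemma hasSum_seriesEval (G : R⟦X⟧) (hs : IsTopologicallyNilpotent s) :
    HasSum (fun n ↦ coeff n G • s ^ n) (seriesEval G s) := by
  let : UniformSpace R := ⊥
  rw [seriesEval_eq_aeval hs]
  exact hasSum_aeval hs G

open scoped PowerSeries.WithPiTopology in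
lemma isTopologicallyNilpotent_seriesEval {G : R⟦X⟧} (hG : constantCoeff G = 0)
    (hs : IsTopologicallyNilpotent s) : IsTopologicallyNilpotent (seriesEval G s) := by
  let : UniformSpace R := ⊥
  rw [seriesEval_eq_aeval hs]
  exact IsTopologicallyNilpotent.map (φ := aeval (R := R) hs) (continuous_aeval hs)
    (WithPiTopology.isTopologicallyNilpotent_of_constantCoeff_zero hG)

open scoped PowerSeries.WithPiTopology in
lemma seriesEval_subst (G : R⟦X⟧) {H : R⟦X⟧} (hH : constantCoeff H = 0)
    (hs : IsTopologicallyNilpotent s) :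
    seriesEval (G.subst H) s = seriesEval G (seriesEval H s) := by
  let : UniformSpace R := ⊥
  have hsubst : HasSubst H := .of_constantCoeff_zero' hH
  have hHs : IsTopologicallyNilpotent (aeval (R := R) hs H) := by
    simpa only [← seriesEval_eq_aeval hs] using isTopologicallyNilpotent_seriesEval hH hs
  have hcomp : (aeval (R := R) hs).comp (aeval hsubst.hasEval) = aeval hHs :=
    comp_aeval hsubst.hasEval (continuous_aeval hs)
  calc seriesEval (G.subst H) s = aeval (R := R) hs (substAlgHom (R := R) hsubst G) := by
        rw [seriesEval_eq_aeval hs, coe_substAlgHom]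
    _ = aeval (R := R) hs (aeval (R := R) hsubst.hasEval G) := by
        rw [substAlgHom_eq_aeval hsubst]
    _ = aeval hHs G := DFunLike.congr_fun hcomp G
    _ = seriesEval G (seriesEval H s) := by rw [seriesEval_eq_aeval hs, seriesEval_eq_aeval hHs]

theorem invOn_seriesEval_substInvOfIsUnit {G : R⟦X⟧} (hG₀ : constantCoeff G = 0)
    (hG₁ : IsUnit (coeff 1 G)) :
    Set.InvOn (seriesEval (G.substInvOfIsUnit hG₁)) (seriesEval G)
      {s : S | IsTopologicallyNilpotent s} {s | IsTopologicallyNilpotent s} := by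
  refine ⟨fun s hs ↦ ?_, fun s hs ↦ ?_⟩
  · rw [← seriesEval_subst _ hG₀ hs, subst_substInvOfIsUnit_left G hG₀, seriesEval_X]
  · rw [← seriesEval_subst _ (constantCoeff_substInvOfIsUnit G hG₁) hs,
      subst_substInvOfIsUnit_right G hG₀, seriesEval_X]

end SeriesEvaluation

section Filtration

variable {K : Type*} [Field K] {m n : ℤ} {x y : K⸨X⸩}

variable (K) in
/-- The fractional ideal `tⁿ K[[t]]` of `K((t))`, as an additive subgroup. -/
noncomputable def tIdeal (n : ℤ) : AddSubgroup K⸨X⸩ :=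
  Valued.v.leAddSubgroup (WithZero.exp (-n))

lemma mem_tIdeal : x ∈ tIdeal K n ↔ Valued.v x ≤ WithZero.exp (-n) :=
  Iff.rfl

lemma mem_tIdeal_iff_coeff : x ∈ tIdeal K n ↔ ∀ k < n, x.coeff k = 0 :=
  LaurentSeries.valuation_le_iff_coeff_lt_eq_zero K

lemma mem_tIdeal_iff_ord : x ∈ tIdeal K n ↔ x = 0 ∨ n ≤ ord x := by
  rw [or_iff_not_imp_left, mem_tIdeal_iff_coeff]
  refine ⟨fun h hx ↦ le_of_not_gt fun hlt ↦ hx (coeff_order_eq_zero.1 (h _ hlt)), fun h k hk ↦ ?_⟩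
  by_cases hx : x = 0
  · rw [hx, coeff_zero]
  · exact coeff_eq_zero_of_lt_order (hk.trans_le (h hx))

lemma mem_ball_iff {c : K⸨X⸩} : x ∈ ball c n ↔ x - c ∈ tIdeal K n := by
  rw [mem_tIdeal_iff_ord, sub_eq_zero]
  rfl

lemma tIdeal_antitone : Antitone (tIdeal K) := fun _ _ h ↦
  Valued.v.leAddSubgroup_monotone (WithZero.exp_le_exp.2 (neg_le_neg h))

lemma mul_mem_tIdeal (hx : x ∈ tIdeal K m) (hy : y ∈ tIdeal K n) : x * y ∈ tIdeal K (m + n) := by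
  rw [mem_tIdeal, map_mul, neg_add, WithZero.exp_add]
  exact mul_le_mul' hx hy

lemma pow_mem_tIdeal (hx : x ∈ tIdeal K n) (i : ℕ) : x ^ i ∈ tIdeal K (i * n) := by
  rw [mem_tIdeal, map_pow, ← mul_neg, ← nsmul_eq_mul, WithZero.exp_nsmul]
  exact pow_le_pow_left' hx i

lemma C_mem_tIdeal (r : K) : HahnSeries.C r ∈ tIdeal K 0 :=
  mem_tIdeal_iff_coeff.2 fun _ hk ↦ coeff_single_of_ne hk.ne

lemma single_mem_tIdeal (n : ℤ) : (single n 1 : K⸨X⸩) ∈ tIdeal K n :=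
  (LaurentSeries.valuation_single_zpow K n).le

lemma single_mul_mem_tIdeal_iff : single m 1 * x ∈ tIdeal K (m + n) ↔ x ∈ tIdeal K n := by
  refine ⟨fun h ↦ ?_, mul_mem_tIdeal (single_mem_tIdeal m)⟩
  simpa [← mul_assoc] using mul_mem_tIdeal (single_mem_tIdeal (-m)) h

lemma natCast_mem_tIdeal (i : ℕ) : (i : K⸨X⸩) ∈ tIdeal K 0 := by
  simpa only [map_natCast] using C_mem_tIdeal (i : K)

lemma hasBasis_nhds_zero_tIdeal :
    (𝓝 (0 : K⸨X⸩)).HasBasis (fun _ : ℤ ↦ True) fun n ↦ (tIdeal K n : Set K⸨X⸩) := by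
  refine (Valued.hasBasis_nhds_zero K⸨X⸩ _).to_hasBasis (fun γ _ ↦ ?_) fun n _ ↦ ?_
  · obtain ⟨y, hy⟩ := MonoidWithZeroHom.ValueGroup₀.restrict₀_surjective _ γ.1
    have hvy : Valued.v y ≠ 0 := by
      refine fun h ↦ γ.ne_zero (hy.symm.trans ?_)
      rwa [MonoidWithZeroHom.ValueGroup₀.restrict₀_eq_zero_iff]
    refine ⟨1 - WithZero.log (Valued.v y), trivial, fun x hx ↦ ?_⟩
    rw [Set.mem_ofPred_eq, ← hy]
    refine Valued.v.restrict_lt_iff.2 ((mem_tIdeal.1 hx).trans_lt ?_)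
    rw [← WithZero.lt_log_iff_exp_lt hvy]
    linarith
  · have hvn : Valued.v.restrict (single n 1 : K⸨X⸩) ≠ 0 := by simp
    refine ⟨Units.mk0 _ hvn, trivial, fun x hx ↦ ?_⟩
    exact (Valued.v.restrict_lt_iff.1 hx).le.trans (single_mem_tIdeal n)

instance : NonarchimedeanRing K⸨X⸩ where
  is_nonarchimedean U hU := by
    obtain ⟨n, -, hn⟩ := hasBasis_nhds_zero_tIdeal.mem_iff.1 hU
    exact ⟨⟨tIdeal K n, (tIdeal K n).isOpen_of_mem_nhds
      (hasBasis_nhds_zero_tIdeal.mem_of_mem trivial)⟩, hn⟩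

lemma isClosed_tIdeal (n : ℤ) : IsClosed (tIdeal K n : Set K⸨X⸩) :=
  (tIdeal K n).isClosed_of_isOpen <| (tIdeal K n).isOpen_of_mem_nhds
    (hasBasis_nhds_zero_tIdeal.mem_of_mem trivial)

variable {ι : Type*} {g : ι → K⸨X⸩}

lemma summable_of_eventually_mem_tIdeal (h : ∀ n, ∀ᶠ i in cofinite, g i ∈ tIdeal K n) :
    Summable g :=
  NonarchimedeanAddGroup.summable_of_tendsto_cofinite_zero <|
    hasBasis_nhds_zero_tIdeal.tendsto_right_iff.2 fun n _ ↦ h n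

lemma tsum_mem_tIdeal (h : ∀ i, g i ∈ tIdeal K n) : ∑' i, g i ∈ tIdeal K n :=
  tsum_mem (isClosed_tIdeal n) h

lemma coeff_tsum_eq_sum (hg : Summable g) {k : ℤ} {s : Finset ι}
    (hs : ∀ i ∉ s, g i ∈ tIdeal K (k + 1)) : (∑' i, g i).coeff k = ∑ i ∈ s, (g i).coeff k := by
  have htail : ∑' i : {i // i ∉ s}, g i ∈ tIdeal K (k + 1) := tsum_mem_tIdeal fun i ↦ hs i i.2
  rw [← hg.sum_add_tsum_subtype_compl s, coeff_add,
    mem_tIdeal_iff_coeff.1 htail k (lt_add_one k), add_zero]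
  exact map_sum (coeff.addMonoidHom k) g s

end Filtration

section StrictConvergence

variable {K : Type*} [Field K] {β : ℤ} {a : ℕ → K⸨X⸩} {d z : K⸨X⸩}

/-- The condition `ord (aᵢ) + iβ → ∞`, under which `∑ aᵢ yⁱ` is a strictly analytic function of
`y ∈ t^β K[[t]]`. -/
def StrictlyConvergent (a : ℕ → K⸨X⸩) (β : ℤ) : Prop :=
  ∀ N : ℤ, ∀ᶠ i : ℕ in atTop, a i ∈ tIdeal K (N - i * β)

lemma strictlyConvergent_iff_ord :
    StrictlyConvergent a β ↔ ∀ N : ℤ, ∃ I : ℕ, ∀ i ≥ I, a i = 0 ∨ N ≤ ord (a i) + (i : ℤ) * β := by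
  simp only [StrictlyConvergent, mem_tIdeal_iff_ord, eventually_atTop, sub_le_iff_le_add]

lemma StrictlyConvergent.eventually_mul_pow_mem (ha : StrictlyConvergent a β)
    (hz : z ∈ tIdeal K β) (N : ℤ) : ∀ᶠ i in atTop, a i * z ^ i ∈ tIdeal K N :=
  (ha N).mono fun i hi ↦ by
    simpa only [sub_add_cancel] using mul_mem_tIdeal hi (pow_mem_tIdeal hz i)

lemma StrictlyConvergent.summable (ha : StrictlyConvergent a β) (hz : z ∈ tIdeal K β) :
    Summable fun i ↦ a i * z ^ i :=
  summable_of_eventually_mem_tIdeal fun N ↦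
    Nat.cofinite_eq_atTop ▸ ha.eventually_mul_pow_mem hz N

lemma StrictlyConvergent.derivative (ha : StrictlyConvergent a β) :
    StrictlyConvergent (fun i ↦ ((i : K⸨X⸩) + 1) * a (i + 1)) β := by
  intro N
  filter_upwards [(tendsto_add_atTop_nat 1).eventually (ha (N + β))] with i hi
  have h := mul_mem_tIdeal (natCast_mem_tIdeal (K := K) (i + 1)) hi
  push_cast at h
  convert h using 2
  ring

lemma StrictlyConvergent.rescale (ha : StrictlyConvergent a β) :
    StrictlyConvergent (fun i ↦ single (i * β) 1 * a i) 0 := by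
  intro N
  filter_upwards [ha N] with i hi
  convert mul_mem_tIdeal (single_mem_tIdeal (K := K) (i * β)) hi using 2
  ring

/-- The coefficients at the centre `d` of the series `∑ aᵢ zⁱ`, that is, its divided derivatives
at `d`. -/
noncomputable def recenter (a : ℕ → K⸨X⸩) (d : K⸨X⸩) (k : ℕ) : K⸨X⸩ :=
  ∑' i, ((i + k).choose k : K⸨X⸩) * a (i + k) * d ^ i

lemma recenter_zero (a : ℕ → K⸨X⸩) (d : K⸨X⸩) : recenter a d 0 = ∑' i, a i * d ^ i := by
  simp only [recenter, add_zero, Nat.choose_zero_right, Nat.cast_one, one_mul]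

lemma recenter_one (a : ℕ → K⸨X⸩) (d : K⸨X⸩) :
    recenter a d 1 = ∑' i : ℕ, ((i : K⸨X⸩) + 1) * a (i + 1) * d ^ i := by
  simp only [recenter, Nat.choose_one_right, Nat.cast_add_one]

lemma recenter_succ_mem_tIdeal {α : ℤ} (ha : ∀ i : ℕ, a (i + 1) ∈ tIdeal K (α - i * β))
    (hd : d ∈ tIdeal K β) (k : ℕ) : recenter a d (k + 1) ∈ tIdeal K (α - k * β) := by
  refine tsum_mem_tIdeal fun i ↦ ?_
  rw [← add_assoc]
  convert mul_mem_tIdeal (mul_mem_tIdeal (natCast_mem_tIdeal _) (ha (i + k)))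
    (pow_mem_tIdeal hd i) using 2
  push_cast
  ring

lemma StrictlyConvergent.summable_binomial (ha : StrictlyConvergent a β) (hd : d ∈ tIdeal K β)
    (hz : z ∈ tIdeal K β) :
    Summable fun p : ℕ × ℕ ↦
      ((p.2 + p.1).choose p.1 : K⸨X⸩) * a (p.2 + p.1) * d ^ p.2 * z ^ p.1 := by
  refine summable_of_eventually_mem_tIdeal fun N ↦ ?_
  have hadd : Tendsto (fun p : ℕ × ℕ ↦ p.2 + p.1) cofinite atTop := tendsto_atTop.2 fun n ↦
    ((Set.finite_lt_nat n).prod (Set.finite_lt_nat n)).subset fun p hp ↦ by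
      simp only [Set.mem_compl_iff, Set.mem_ofPred_eq, Set.mem_prod] at hp ⊢
      lia
  filter_upwards [hadd.eventually (ha N)] with p hp
  convert mul_mem_tIdeal (mul_mem_tIdeal (mul_mem_tIdeal (natCast_mem_tIdeal _) hp)
    (pow_mem_tIdeal hd p.2)) (pow_mem_tIdeal hz p.1) using 2
  push_cast
  ring

lemma StrictlyConvergent.hasSum_recenter (ha : StrictlyConvergent a β) (hd : d ∈ tIdeal K β)
    (hz : z ∈ tIdeal K β) :
    HasSum (fun k ↦ recenter a d k * z ^ k) (∑' i, a i * (z + d) ^ i) := by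
  have hsum := ha.summable_binomial hd hz
  have hdiag (n : ℕ) : ∑ p ∈ Finset.HasAntidiagonal.antidiagonal n,
      ((p.2 + p.1).choose p.1 : K⸨X⸩) * a (p.2 + p.1) * d ^ p.2 * z ^ p.1 = a n * (z + d) ^ n := by
    rw [(Commute.all z d).add_pow', Finset.mul_sum]
    refine Finset.sum_congr rfl fun p hp ↦ ?_
    rw [add_comm p.2, Finset.HasAntidiagonal.mem_antidiagonal.1 hp, nsmul_eq_mul]
    ring
  have htotal : ∑' i, a i * (z + d) ^ i = ∑' p : ℕ × ℕ,
      ((p.2 + p.1).choose p.1 : K⸨X⸩) * a (p.2 + p.1) * d ^ p.2 * z ^ p.1 := by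
    refine HasSum.tsum_eq <| HasSum.sigma
      (Finset.HasAntidiagonal.sigmaAntidiagonalEquivProd.hasSum_iff.2 hsum.hasSum) fun n ↦ ?_
    rw [← hdiag]
    exact Finset.hasSum _ _
  rw [htotal]
  refine hsum.hasSum.prod_fiberwise fun k ↦ ?_
  rw [recenter, ← tsum_mul_right]
  exact (hsum.prod_factor k).hasSum

end StrictConvergence

section GaussNorm

variable {K : Type*} [Field K] {α β : ℤ} {a : ℕ → K⸨X⸩}

open scoped Polynomial in
lemma StrictlyConvergent.exists_polynomial_eval_eq_coeff_tsum (ha : StrictlyConvergent a 0)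
    (k : ℤ) : ∃ P : K[X], (∀ i, P.coeff i = (a i).coeff k) ∧
      ∀ r, P.eval r = (∑' i, a i * HahnSeries.C r ^ i).coeff k := by
  obtain ⟨I, hI⟩ := eventually_atTop.1 (ha (k + 1))
  simp only [mul_zero, sub_zero] at hI
  refine ⟨∑ i ∈ Finset.range I, Polynomial.monomial i ((a i).coeff k), fun i ↦ ?_, fun r ↦ ?_⟩
  · have htail : I ≤ i → (a i).coeff k = 0 := fun hi ↦
      mem_tIdeal_iff_coeff.1 (hI i hi) k (lt_add_one k)
    simpa [Polynomial.coeff_monomial] using fun hi ↦ (htail hi).symm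
  · have htail : ∀ i ∉ Finset.range I, a i * HahnSeries.C r ^ i ∈ tIdeal K (k + 1) := fun i hi ↦ by
      simpa using mul_mem_tIdeal (hI i (by simpa using hi)) (pow_mem_tIdeal (C_mem_tIdeal r) i)
    rw [coeff_tsum_eq_sum (ha.summable (C_mem_tIdeal r)) htail, Polynomial.eval_finsetSum]
    refine Finset.sum_congr rfl fun i _ ↦ ?_
    rw [Polynomial.eval_monomial, ← map_pow, mul_comm, mul_comm (a i), HahnSeries.C_mul_eq_smul,
      HahnSeries.coeff_smul, smul_eq_mul]

lemma StrictlyConvergent.mem_tIdeal_of_forall_tsum_mem [Infinite K] (ha : StrictlyConvergent a β)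
    (h : ∀ y ∈ tIdeal K β, ∑' i, a i * y ^ i ∈ tIdeal K α) (i : ℕ) :
    a i ∈ tIdeal K (α - i * β) := by
  rw [← single_mul_mem_tIdeal_iff (m := i * β), add_sub_cancel, mem_tIdeal_iff_coeff]
  intro k hk
  obtain ⟨P, hPcoeff, hPeval⟩ := ha.rescale.exists_polynomial_eval_eq_coeff_tsum k
  have hP : P = 0 := Polynomial.funext fun r ↦ by
    have hy : single β 1 * HahnSeries.C r ∈ tIdeal K β := by
      simpa using mul_mem_tIdeal (single_mem_tIdeal β) (C_mem_tIdeal r)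
    rw [hPeval, Polynomial.eval_zero, ← mem_tIdeal_iff_coeff.1 (h _ hy) k hk]
    congr 1
    refine tsum_congr fun j ↦ ?_
    rw [mul_pow, single_pow, one_pow, nsmul_eq_mul]
    ring
  rw [← hPcoeff, hP, Polynomial.coeff_zero]

end GaussNorm

section ValuationRing

variable {K : Type*} [Field K] {n : ℤ}

lemma mem_tIdeal_add_one_iff {x : K⸨X⸩} :
    x ∈ tIdeal K (n + 1) ↔ Valued.v x < WithZero.exp (-n) := by
  rw [mem_tIdeal, ← WithZero.lt_mul_exp_iff_le WithZero.exp_ne_zero, ← WithZero.exp_add,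
    neg_add_rev, neg_add_cancel_comm]

lemma mem_integer_iff_mem_tIdeal {x : K⸨X⸩} : x ∈ 𝒪[K⸨X⸩] ↔ x ∈ tIdeal K 0 := by
  rw [mem_tIdeal, neg_zero, WithZero.exp_zero, Valuation.mem_integer_iff]

instance : IsUniformAddGroup 𝒪[K⸨X⸩] :=
  inferInstanceAs (IsUniformAddGroup (𝒪[K⸨X⸩]).toAddSubgroup)

instance : CompleteSpace 𝒪[K⸨X⸩] :=
  (Valued.isClosed_integer K⸨X⸩).completeSpace_coe

lemma hasBasis_nhds_zero_leIdeal :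
    (𝓝 (0 : 𝒪[K⸨X⸩])).HasBasis (fun _ : ℤ ↦ True) fun n ↦
      ((Valued.v.leIdeal (WithZero.exp (-n)) : Ideal 𝒪[K⸨X⸩]) : Set 𝒪[K⸨X⸩]) := by
  rw [nhds_subtype_eq_comap]
  exact hasBasis_nhds_zero_tIdeal.comap _

instance : IsLinearTopology 𝒪[K⸨X⸩] 𝒪[K⸨X⸩] :=
  .mk_of_hasBasis' _ hasBasis_nhds_zero_leIdeal fun I r _ hm ↦ I.mul_mem_left r hm

lemma isTopologicallyNilpotent_iff_mem_tIdeal {s : 𝒪[K⸨X⸩]} :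
    IsTopologicallyNilpotent s ↔ (s : K⸨X⸩) ∈ tIdeal K 1 := by
  refine ⟨fun hs ↦ ?_, fun hs ↦ ?_⟩
  · obtain ⟨i, hi⟩ :=
      (hs.eventually (hasBasis_nhds_zero_leIdeal.mem_of_mem (i := 1) trivial)).exists
    have hi' : Valued.v (s : K⸨X⸩) ^ i < 1 := by
      rw [← map_pow, ← WithZero.exp_zero, ← neg_zero, ← mem_tIdeal_add_one_iff]
      exact hi
    rw [← zero_add 1, mem_tIdeal_add_one_iff, neg_zero, WithZero.exp_zero]
    exact lt_of_not_ge fun h ↦ hi'.not_ge (one_le_pow₀ h)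
  · rw [IsTopologicallyNilpotent, Topology.IsEmbedding.subtypeVal.tendsto_nhds_iff]
    exact Valued.tendsto_zero_pow_of_le_exp_neg_one hs

end ValuationRing

section Normalization

variable {K : Type*} [Field K] {β γ : ℤ} {P : 𝒪[K⸨X⸩]⟦X⟧} {e : ℕ → K⸨X⸩}

/-- The coefficients of the series `t^γ P(t^{-β} z)` in the variable `z`, where `P` is a power
series over `K[[t]]`: it maps `t^(β+1) K[[t]]` to `t^(γ+1) K[[t]]` when `P(0) = 0`. -/
noncomputable def scaledCoeff (β γ : ℤ) (P : 𝒪[K⸨X⸩]⟦X⟧) (k : ℕ) : K⸨X⸩ :=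
  single (γ - k * β) 1 * ((coeff k P : 𝒪[K⸨X⸩]) : K⸨X⸩)

lemma scaledCoeff_mem_tIdeal (P : 𝒪[K⸨X⸩]⟦X⟧) (k : ℕ) :
    scaledCoeff β γ P k ∈ tIdeal K (γ - k * β) := by
  simpa only [scaledCoeff, add_zero] using
    mul_mem_tIdeal (single_mem_tIdeal _) (mem_integer_iff_mem_tIdeal.1 (coeff k P).2)

lemma exists_scaledCoeff_eq (he : ∀ k : ℕ, e k ∈ tIdeal K (γ - k * β)) :
    ∃ P, scaledCoeff β γ P = e := by
  have hcoeff (k : ℕ) : single (-(γ - k * β)) 1 * e k ∈ 𝒪[K⸨X⸩] := by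
    rw [mem_integer_iff_mem_tIdeal, ← neg_add_cancel (γ - k * β), single_mul_mem_tIdeal_iff]
    exact he k
  refine ⟨.mk fun k ↦ ⟨_, hcoeff k⟩, funext fun k ↦ ?_⟩
  rw [scaledCoeff, coeff_mk, ← mul_assoc, single_mul_single, add_neg_cancel, mul_one,
    single_zero_one, one_mul]

lemma strictlyConvergent_of_forall_mem (he : ∀ k : ℕ, e k ∈ tIdeal K (γ - k * β)) :
    StrictlyConvergent e (β + 1) := fun N ↦ by
  filter_upwards [eventually_ge_atTop (N - γ).toNat] with k hk
  refine tIdeal_antitone ?_ (he k)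
  have : N - γ ≤ k := Int.toNat_le.1 hk
  linarith

lemma mem_tIdeal_add_one_iff_exists {z : K⸨X⸩} : z ∈ tIdeal K (β + 1) ↔
    ∃ s : 𝒪[K⸨X⸩], IsTopologicallyNilpotent s ∧ single β 1 * (s : K⸨X⸩) = z := by
  simp only [isTopologicallyNilpotent_iff_mem_tIdeal]
  refine ⟨fun hz ↦ ?_, ?_⟩
  · have hs : single (-β) 1 * z ∈ tIdeal K 1 := by
      simpa using mul_mem_tIdeal (single_mem_tIdeal (-β)) hz
    refine ⟨⟨_, mem_integer_iff_mem_tIdeal.2 (tIdeal_antitone zero_le_one hs)⟩, hs, ?_⟩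
    simp [← mul_assoc]
  · rintro ⟨s, hs, rfl⟩
    exact single_mul_mem_tIdeal_iff.2 hs

lemma tsum_scaledCoeff (γ : ℤ) (P : 𝒪[K⸨X⸩]⟦X⟧) {s : 𝒪[K⸨X⸩]}
    (hs : IsTopologicallyNilpotent s) :
    ∑' k, scaledCoeff β γ P k * (single β 1 * (s : K⸨X⸩)) ^ k =
      single γ 1 * ((seriesEval P s : 𝒪[K⸨X⸩]) : K⸨X⸩) := by
  have hsum : HasSum (fun k ↦ ((coeff k P : 𝒪[K⸨X⸩]) : K⸨X⸩) * (s : K⸨X⸩) ^ k)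
      ((seriesEval P s : 𝒪[K⸨X⸩]) : K⸨X⸩) :=
    (hasSum_seriesEval P hs).map (𝒪[K⸨X⸩]).subtype continuous_subtype_val
  rw [← (hsum.mul_left (single γ 1)).tsum_eq]
  refine tsum_congr fun k ↦ ?_
  have hγ : (single γ 1 : K⸨X⸩) = single (γ - k * β) 1 * single (k * β) 1 := by
    rw [single_mul_single, sub_add_cancel, one_mul]
  rw [scaledCoeff, mul_pow, single_pow, one_pow, nsmul_eq_mul, hγ]
  ring

lemma mapsTo_tsum_scaledCoeff (hP : constantCoeff P = 0) :
    Set.MapsTo (fun z ↦ ∑' k, scaledCoeff β γ P k * z ^ k)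
      (tIdeal K (β + 1)) (tIdeal K (γ + 1)) := by
  intro z hz
  obtain ⟨s, hs, rfl⟩ := mem_tIdeal_add_one_iff_exists.1 hz
  exact mem_tIdeal_add_one_iff_exists.2
    ⟨seriesEval P s, isTopologicallyNilpotent_seriesEval hP hs, (tsum_scaledCoeff γ P hs).symm⟩

lemma leftInvOn_tsum_scaledCoeff {Q : 𝒪[K⸨X⸩]⟦X⟧} (hP : constantCoeff P = 0)
    (h : Set.LeftInvOn (seriesEval Q) (seriesEval P) {s : 𝒪[K⸨X⸩] | IsTopologicallyNilpotent s}) :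
    Set.LeftInvOn (fun w ↦ ∑' j, scaledCoeff γ β Q j * w ^ j)
      (fun z ↦ ∑' k, scaledCoeff β γ P k * z ^ k) (tIdeal K (β + 1)) := by
  intro z hz
  obtain ⟨s, hs, rfl⟩ := mem_tIdeal_add_one_iff_exists.1 hz
  simp only [tsum_scaledCoeff γ P hs,
    tsum_scaledCoeff β Q (isTopologicallyNilpotent_seriesEval hP hs), h hs]

lemma isUnit_coeff_of_scaledCoeff_notMem {k : ℕ}
    (h : scaledCoeff β γ P k ∉ tIdeal K (γ - k * β + 1)) : IsUnit (coeff k P) := by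
  contrapose! h
  rw [scaledCoeff, single_mul_mem_tIdeal_iff, ← zero_add 1, mem_tIdeal_add_one_iff]
  simpa using Valuation.Integer.not_isUnit_iff_valuation_lt_one.1 h

theorem bijOn_tsum_and_exists_leftInvOn (he₀ : e 0 = 0)
    (he : ∀ k : ℕ, e k ∈ tIdeal K (γ - k * β)) (he₁ : e 1 ∉ tIdeal K (γ - β + 1)) :
    Set.BijOn (fun z ↦ ∑' k, e k * z ^ k) (tIdeal K (β + 1)) (tIdeal K (γ + 1)) ∧
      ∃ b, StrictlyConvergent b (γ + 1) ∧
        Set.LeftInvOn (fun w ↦ ∑' j, b j * w ^ j) (fun z ↦ ∑' k, e k * z ^ k)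
          (tIdeal K (β + 1)) := by
  obtain ⟨P, rfl⟩ := exists_scaledCoeff_eq he
  have hP₀ : constantCoeff P = 0 := by
    simpa [scaledCoeff] using he₀
  have hP₁ : IsUnit (coeff 1 P) :=
    isUnit_coeff_of_scaledCoeff_notMem (β := β) (γ := γ) (by rwa [Nat.cast_one, one_mul])
  have hQ₀ := constantCoeff_substInvOfIsUnit P hP₁
  obtain ⟨hleft, hright⟩ := invOn_seriesEval_substInvOfIsUnit (S := 𝒪[K⸨X⸩]) hP₀ hP₁
  have hinv := leftInvOn_tsum_scaledCoeff (β := β) (γ := γ) hP₀ hleft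
  refine ⟨Set.InvOn.bijOn ⟨hinv, leftInvOn_tsum_scaledCoeff hQ₀ hright⟩
    (mapsTo_tsum_scaledCoeff hP₀) (mapsTo_tsum_scaledCoeff hQ₀), _, ?_, hinv⟩
  exact strictlyConvergent_of_forall_mem (scaledCoeff_mem_tIdeal _)

end Normalization

section Recentring

variable {K : Type*} [Field K] {α β m n : ℤ} {a : ℕ → K⸨X⸩} {d z : K⸨X⸩}

lemma StrictlyConvergent.succ_mem_tIdeal_of_forall_derivative_mem [CharZero K]
    (ha : StrictlyConvergent a β)
    (h : ∀ y ∈ tIdeal K β, ∑' i : ℕ, ((i : K⸨X⸩) + 1) * a (i + 1) * y ^ i ∈ tIdeal K α) (i : ℕ) :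
    a (i + 1) ∈ tIdeal K (α - i * β) := by
  have := CharZero.infinite K
  have hinv : HahnSeries.C ((i + 1 : K)⁻¹) * ((i : K⸨X⸩) + 1) = 1 := by
    rw [← map_natCast (HahnSeries.C (Γ := ℤ) (R := K)) i, ← map_one HahnSeries.C, ← map_add,
      ← map_mul, inv_mul_cancel₀ i.cast_add_one_ne_zero]
  simpa only [← mul_assoc, hinv, one_mul, zero_add] using
    mul_mem_tIdeal (C_mem_tIdeal (i + 1 : K)⁻¹) (ha.derivative.mem_tIdeal_of_forall_tsum_mem h i)

lemma StrictlyConvergent.tsum_update_recenter (ha : StrictlyConvergent a β)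
    (hd : d ∈ tIdeal K β) (hz : z ∈ tIdeal K β) :
    ∑' k, Function.update (recenter a d) 0 0 k * z ^ k =
      ∑' i, a i * (z + d) ^ i - ∑' i, a i * d ^ i := by
  have hupdate (k : ℕ) : Function.update (recenter a d) 0 0 k * z ^ k =
      Function.update (fun k ↦ recenter a d k * z ^ k) 0 0 k := by
    obtain _ | k := k <;> simp
  rw [tsum_congr hupdate, ((ha.hasSum_recenter hd hz).update 0 0).tsum_eq, recenter_zero, pow_zero,
    mul_one, zero_sub, neg_add_eq_sub]

theorem StrictlyConvergent.bijOn_tsum_sub_and_exists_leftInvOn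
    (ha : StrictlyConvergent a β) (hd : d ∈ tIdeal K β)
    (hcoeff : ∀ i : ℕ, a (i + 1) ∈ tIdeal K (α - i * β))
    (hderiv : ∑' i : ℕ, ((i : K⸨X⸩) + 1) * a (i + 1) * d ^ i ∉ tIdeal K (α + 1)) :
    Set.BijOn (fun z ↦ ∑' i, a i * (z + d) ^ i - ∑' i, a i * d ^ i)
        (tIdeal K (β + 1)) (tIdeal K (α + β + 1)) ∧
      ∃ b, StrictlyConvergent b (α + β + 1) ∧
        Set.LeftInvOn (fun w ↦ ∑' j, b j * w ^ j)
          (fun z ↦ ∑' i, a i * (z + d) ^ i - ∑' i, a i * d ^ i) (tIdeal K (β + 1)) := by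
  set e := Function.update (recenter a d) 0 0 with he_def
  have he₁ : e 1 ∉ tIdeal K (α + β - β + 1) := by
    rwa [he_def, Function.update_of_ne one_ne_zero, recenter_one, add_sub_cancel_right]
  have he (k : ℕ) : e k ∈ tIdeal K (α + β - k * β) := by
    obtain _ | k := k
    · exact zero_mem _
    · rw [he_def, Function.update_of_ne k.succ_ne_zero]
      convert recenter_succ_mem_tIdeal hcoeff hd k using 2
      push_cast
      ring
  have heq : Set.EqOn (fun z ↦ ∑' k, e k * z ^ k)
      (fun z ↦ ∑' i, a i * (z + d) ^ i - ∑' i, a i * d ^ i) (tIdeal K (β + 1)) :=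
    fun z hz ↦ ha.tsum_update_recenter hd (tIdeal_antitone (lt_add_one β).le hz)
  obtain ⟨hbij, b, hb, hinv⟩ := bijOn_tsum_and_exists_leftInvOn (Function.update_self ..) he he₁
  exact ⟨hbij.congr heq, b, hb, hinv.congr_right heq⟩

lemma bijOn_ball_of_bijOn_tIdeal {φ f : K⸨X⸩ → K⸨X⸩} {x₀ : K⸨X⸩}
    (hφ : Set.BijOn φ (tIdeal K m) (tIdeal K n))
    (hf : ∀ x ∈ ball x₀ m, φ (x - x₀) = f x - f x₀) :
    Set.BijOn f (ball x₀ m) (ball (f x₀) n) := by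
  have hsub : Set.BijOn (· - x₀) (ball x₀ m) (tIdeal K m) :=
    (Equiv.subRight x₀).bijOn fun _ ↦ mem_ball_iff.symm
  have hadd : Set.BijOn (· + f x₀) (tIdeal K n) (ball (f x₀) n) :=
    (Equiv.addRight (f x₀)).bijOn fun _ ↦ by simp [mem_ball_iff]
  exact (hadd.comp (hφ.comp hsub)).congr fun x hx ↦ by simp [hf x hx]

end Recentring

theorem stmt4_general {K : Type*} [Field K] [CharZero K]
    (c : LaurentSeries K) (β : ℤ) (a : ℕ → LaurentSeries K)
    (hconv : ∀ N : ℤ, ∃ I : ℕ, ∀ i ≥ I, a i = 0 ∨ N ≤ ord (a i) + (i : ℤ) * β)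
    (f f' : LaurentSeries K → LaurentSeries K)
    (hf : ∀ x ∈ ball c β, f x = ∑' i : ℕ, a i * (x - c) ^ i)
    (hf' : ∀ x ∈ ball c β,
      f' x = ∑' i : ℕ, ((i : LaurentSeries K) + 1) * a (i + 1) * (x - c) ^ i)
    (α : ℤ) (hα : ∀ x ∈ ball c β, f' x = 0 ∨ α ≤ ord (f' x))
    (x₀ : LaurentSeries K) (hx₀ : x₀ ∈ ball c β) (hne : f' x₀ ≠ 0) (hord : ord (f' x₀) = α) :
    Set.BijOn f (ball x₀ (β + 1)) (ball (f x₀) (α + β + 1)) ∧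
    ∃ b : ℕ → LaurentSeries K,
      (∀ N : ℤ, ∃ I : ℕ, ∀ j ≥ I, b j = 0 ∨ N ≤ ord (b j) + (j : ℤ) * (α + β + 1)) ∧
      ∀ w ∈ ball (f x₀) (α + β + 1), ∀ x ∈ ball x₀ (β + 1),
        f x = w → x = x₀ + ∑' j : ℕ, b j * (w - f x₀) ^ j := by
  have ha : StrictlyConvergent a β := strictlyConvergent_iff_ord.2 hconv
  have hd : x₀ - c ∈ tIdeal K β := mem_ball_iff.1 hx₀
  have hcoeff := ha.succ_mem_tIdeal_of_forall_derivative_mem (α := α) fun y hy ↦ by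
    have hx : c + y ∈ ball c β := mem_ball_iff.2 (by rwa [add_sub_cancel_left])
    simpa only [hf' _ hx, add_sub_cancel_left] using mem_tIdeal_iff_ord.2 (hα _ hx)
  have hderiv : f' x₀ ∉ tIdeal K (α + 1) := by
    rw [mem_tIdeal_iff_ord, hord]
    exact not_or_intro hne (lt_add_one α).not_ge
  rw [hf' x₀ hx₀] at hderiv
  have hφ (x) (hx : x ∈ ball x₀ (β + 1)) :
      ∑' i, a i * (x - x₀ + (x₀ - c)) ^ i - ∑' i, a i * (x₀ - c) ^ i = f x - f x₀ := by
    have hxc : x - c ∈ tIdeal K β := by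
      rw [← sub_add_sub_cancel x x₀ c]
      exact add_mem (tIdeal_antitone (lt_add_one β).le (mem_ball_iff.1 hx)) hd
    rw [sub_add_sub_cancel, hf x (mem_ball_iff.2 hxc), hf x₀ hx₀]
  obtain ⟨hbij, b, hb, hinv⟩ := ha.bijOn_tsum_sub_and_exists_leftInvOn hd hcoeff hderiv
  refine ⟨bijOn_ball_of_bijOn_tIdeal hbij hφ, b, strictlyConvergent_iff_ord.1 hb, ?_⟩
  rintro _ - x hx rfl
  rw [← hφ x hx]
  exact eq_add_of_sub_eq' (hinv (mem_ball_iff.1 hx)).symm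

/-- Let `f` be strictly analytic on the ball `B = c + t^β K[[t]]`, with derivative `f'`,
and suppose `f' x ≠ 0` and `ord (f' x) = α` for all `x ∈ B`.  Then for every `x₀ ∈ B`
the restriction of `f` to `x₀ + t^(β+1) K[[t]]` is a bijection onto the ball
`f(x₀) + t^(α+β+1) K[[t]]`, whose inverse is strictly analytic: there is a sequence
`(b_j)` with the summability property relative to the exponent `α+β+1` such that the
inverse is given by `w ↦ x₀ + ∑_j b_j (w - f x₀)^j`. -/
theorem stmt4 {K : Type*} [Field K] [CharZero K]
    (c : LaurentSeries K) (β : ℤ) (a : ℕ → LaurentSeries K)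
    (hconv : ∀ N : ℤ, ∃ I : ℕ, ∀ i ≥ I, a i = 0 ∨ N ≤ ord (a i) + (i : ℤ) * β)
    (f f' : LaurentSeries K → LaurentSeries K)
    (hf : ∀ x ∈ ball c β, f x = ∑' i : ℕ, a i * (x - c) ^ i)
    (hf' : ∀ x ∈ ball c β,
      f' x = ∑' i : ℕ, ((i : LaurentSeries K) + 1) * a (i + 1) * (x - c) ^ i)
    (α : ℤ) (hα : ∀ x ∈ ball c β, f' x ≠ 0 ∧ ord (f' x) = α) :
    ∀ x₀ ∈ ball c β,
      Set.BijOn f (ball x₀ (β + 1)) (ball (f x₀) (α + β + 1)) ∧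
      ∃ b : ℕ → LaurentSeries K,
        (∀ N : ℤ, ∃ I : ℕ, ∀ j ≥ I, b j = 0 ∨ N ≤ ord (b j) + (j : ℤ) * (α + β + 1)) ∧
        ∀ w ∈ ball (f x₀) (α + β + 1), ∀ x ∈ ball x₀ (β + 1),
          f x = w → x = x₀ + ∑' j : ℕ, b j * (w - f x₀) ^ j :=
  fun x₀ hx₀ ↦ stmt4_general c β a hconv f f' hf hf' α (fun x hx ↦ .inr (hα x hx).2.ge) x₀ hx₀
    (hα x₀ hx₀).1 (hα x₀ hx₀).2
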